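/- arXiv:1110.0104 — 3 statements merged into one kernel-verified Lean document; each statement's English description precedes it below -/
import Mathlib

section
/- Fix an integer j ≥ 1, and let R ⊆ A be the ℂ-span of the monomials z^l u^i with 1 ≤ i ≤ n and k·i − j + 1 ≤ l ≤ j − 1. For every element q of the ideal uA (i.e. every q ∈ A whose u⁰-coefficient vanishes) there exists a unique p ∈ R such that q − p ∈ z^j·O_U + z^{−j}·O_V; equivalently, there exist f ∈ O_U and g ∈ O_V with q = p + z^j·f − z^{−j}·g, and the upper-triangular matrices ((1,g),(0,1)) and ((1,f),(0,1)) then satisfy ((1,g),(0,1))·M_q = M_p·((1,f),(0,1)), so every rank-2 bundle with transition matrix M_q is isomorphic to E_p with p in the normal form R. (This is the pointwise content of the normal-form lemma for transition matrices of extensions of O(j) by O(−j) on Z_k^{(n)}.) -/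
set_option synthInstance.maxHeartbeats 1000000
set_option maxHeartbeats 1000000

noncomputable section

/-- The ring of Laurent polynomials `ℂ[z,z⁻¹]`. -/
abbrev Lz : Type := LaurentPolynomial ℂ

/-- The ring `P = ℂ[z,z⁻¹][[u]]` of formal power series in `u` with Laurent
polynomial coefficients. -/
abbrev Pz : Type := PowerSeries Lz

/-- The monomial `z^l u^i` as an element of `P`. -/
def mon (l : ℤ) (i : ℕ) : Pz := PowerSeries.monomial (R := Lz) i (LaurentPolynomial.T l)

/-- The ideal `(u^{n+1})` of `P`. -/
def In (n : ℕ) : Ideal Pz := Ideal.span {(PowerSeries.X : Pz) ^ (n + 1)}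

/-- The ring `A = ℂ[z,z⁻¹][u]/(u^{n+1})`, the coordinate ring of the overlap of the two
standard charts of the `n`-th infinitesimal neighborhood `Z_k^{(n)}`. -/
abbrev Aq (n : ℕ) : Type := Pz ⧸ In n

/-- The quotient map `P → A`. -/
def toA (n : ℕ) : Pz →+* Aq n := Ideal.Quotient.mk (In n)

/-- The monomial `z^l u^i` as an element of `A`. -/
def monA (n : ℕ) (l : ℤ) (i : ℕ) : Aq n := toA n (mon l i)

/-- `O_U ⊆ A`: the `ℂ`-span of the monomials `z^l u^i` with `l ≥ 0`, `0 ≤ i ≤ n`. -/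
def OU (n : ℕ) : Submodule ℂ (Aq n) :=
  Submodule.span ℂ {x | ∃ l : ℤ, ∃ i : ℕ, 0 ≤ l ∧ i ≤ n ∧ x = monA n l i}

/-- `O_V ⊆ A`: the `ℂ`-span of the monomials `z^l u^i` with `l ≤ k·i`, `0 ≤ i ≤ n`. -/
def OV (k n : ℕ) : Submodule ℂ (Aq n) :=
  Submodule.span ℂ {x | ∃ l : ℤ, ∃ i : ℕ, l ≤ k * i ∧ i ≤ n ∧ x = monA n l i}

/-- The submodule `a·S` obtained from a submodule `S` by multiplying by a fixed element `a`. -/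
def msmul {n : ℕ} (a : Aq n) (S : Submodule ℂ (Aq n)) : Submodule ℂ (Aq n) :=
  Submodule.map (LinearMap.mulLeft ℂ a) S

/-- `R ⊆ A`: the `ℂ`-span of the monomials `z^l u^i` with `1 ≤ i ≤ n` and
`k·i − j + 1 ≤ l ≤ j − 1` (the space of normal forms of extension classes). -/
def Rmod (k n : ℕ) (j : ℤ) : Submodule ℂ (Aq n) :=
  Submodule.span ℂ
    {x | ∃ l : ℤ, ∃ i : ℕ, 1 ≤ i ∧ i ≤ n ∧ (k : ℤ) * i - j + 1 ≤ l ∧ l ≤ j - 1 ∧ x = monA n l i}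

/-- The transition matrix `M_p = ((z^j, p),(0, z^{−j}))` of the bundle `E_p`. -/
def Mmat (n : ℕ) (j : ℤ) (p : Aq n) : Matrix (Fin 2) (Fin 2) (Aq n) :=
  !![monA n j 0, p; 0, monA n (-j) 0]

/-- `E_p ≅ E_{p′}`: there are matrices `A₁` with entries in `O_U` and `B₁` with entries
in `O_V`, with `det A₁` a unit of `O_U` and `det B₁` a unit of `O_V`, with
`B₁ · M_p = M_{p′} · A₁`. -/
def BundleIso (k n : ℕ) (j : ℤ) (p p' : Aq n) : Prop :=
  ∃ A₁ B₁ : Matrix (Fin 2) (Fin 2) (Aq n),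
    (∀ a b : Fin 2, A₁ a b ∈ OU n) ∧ (∀ a b : Fin 2, B₁ a b ∈ OV k n) ∧
    (∃ w ∈ OU n, A₁.det * w = 1) ∧ (∃ w ∈ OV k n, B₁.det * w = 1) ∧
    B₁ * Mmat n j p = Mmat n j p' * A₁

/-!
The monomials `z^l u^i` with `i ≤ n` form a `ℂ`-basis of `A`, and every space in sight is spanned
by a set of them: `uA` by `1 ≤ i`, `z^j O_U` by `j ≤ l`, `z^{-j} O_V` by `l ≤ k i - j`, and `R` by
those exponents with `1 ≤ i` which lie strictly between the last two regions. Existence and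
uniqueness of the normal form are therefore the facts that the exponents of `R` are disjoint from
those of `z^j O_U + z^{-j} O_V`, and together with them cover the exponents of `uA`.
-/

section LinearAlgebra

variable {R M N : Type*} [Ring R] [AddCommGroup M] [Module R M] [AddCommGroup N] [Module R N]

theorem existsUnique_mem_and_sub_mem_of_disjoint {S T : Submodule R M} (hST : Disjoint S T)
    {x : M} (hx : x ∈ S ⊔ T) : ∃! s, s ∈ S ∧ x - s ∈ T := by
  obtain ⟨s, hs, t, ht, rfl⟩ := Submodule.mem_sup.1 hx
  refine ⟨s, ⟨hs, by rwa [add_sub_cancel_left]⟩, fun s' ⟨hs', hsub⟩ => ?_⟩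
  have hdiff : s' - s ∈ T := by
    have := T.sub_mem ht hsub
    rwa [show t - (s + t - s') = s' - s by abel] at this
  exact sub_eq_zero.1 (Submodule.disjoint_def.1 hST _ (S.sub_mem hs' hs) hdiff)

theorem sub_mem_map_sup_map_iff {S T : Submodule R M} {φ ψ : M →ₗ[R] N} {x y : N} :
    x - y ∈ S.map φ ⊔ T.map ψ ↔ ∃ s ∈ S, ∃ t ∈ T, x = y + φ s - ψ t := by
  simp only [Submodule.mem_sup, Submodule.mem_map, exists_exists_and_eq_and]
  constructor
  · rintro ⟨s, hs, t, ht, h⟩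
    refine ⟨s, hs, -t, T.neg_mem ht, ?_⟩
    rw [map_neg, sub_neg_eq_add, add_assoc, h, add_sub_cancel]
  · rintro ⟨s, hs, t, ht, rfl⟩
    exact ⟨s, hs, -t, T.neg_mem ht, by rw [map_neg]; abel⟩

end LinearAlgebra

theorem unitriangular_mul_eq_mul_unitriangular_iff {R : Type*} [CommSemiring R]
    {a d p q f g : R} :
    !![1, g; 0, 1] * !![a, q; 0, d] = !![a, p; 0, d] * !![1, f; 0, 1] ↔
      q + g * d = a * f + p := by
  simp

section TruncatedPowerSeries

variable {R : Type*} [CommRing R] {N : ℕ}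

theorem mk_span_X_pow_eq_mk_iff {x y : PowerSeries R} :
    Ideal.Quotient.mk (Ideal.span {(PowerSeries.X : PowerSeries R) ^ N}) x =
        Ideal.Quotient.mk (Ideal.span {(PowerSeries.X : PowerSeries R) ^ N}) y ↔
      ∀ i < N, PowerSeries.coeff i x = PowerSeries.coeff i y := by
  simp only [Ideal.Quotient.eq, Ideal.mem_span_singleton, PowerSeries.X_pow_dvd_iff, map_sub,
    sub_eq_zero]

theorem coeff_sum_smul_X_pow (c : Fin N → R) (i : Fin N) :
    PowerSeries.coeff (i : ℕ) (∑ m, c m • (PowerSeries.X : PowerSeries R) ^ (m : ℕ)) = c i := by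
  simp [PowerSeries.coeff_X_pow, Fin.val_inj]

theorem linearIndependent_mk_X_pow :
    LinearIndependent R fun i : Fin N =>
      Ideal.Quotient.mk (Ideal.span {(PowerSeries.X : PowerSeries R) ^ N})
        (PowerSeries.X ^ (i : ℕ)) := by
  rw [Fintype.linearIndependent_iff]
  intro c hc i
  have hmk : Ideal.Quotient.mk (Ideal.span {(PowerSeries.X : PowerSeries R) ^ N})
      (∑ m, c m • (PowerSeries.X : PowerSeries R) ^ (m : ℕ)) = Ideal.Quotient.mk _ 0 := by
    rw [map_sum, map_zero]
    exact hc
  rw [← coeff_sum_smul_X_pow c i, mk_span_X_pow_eq_mk_iff.1 hmk i i.isLt, map_zero]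

theorem span_range_mk_X_pow :
    Submodule.span R (Set.range fun i : Fin N =>
      Ideal.Quotient.mk (Ideal.span {(PowerSeries.X : PowerSeries R) ^ N})
        (PowerSeries.X ^ (i : ℕ))) = ⊤ := by
  refine eq_top_iff.2 fun a _ => ?_
  obtain ⟨x, rfl⟩ := Ideal.Quotient.mk_surjective a
  have hx : Ideal.Quotient.mk (Ideal.span {(PowerSeries.X : PowerSeries R) ^ N}) x =
      Ideal.Quotient.mk _
        (∑ m : Fin N, PowerSeries.coeff (m : ℕ) x • PowerSeries.X ^ (m : ℕ)) :=
    mk_span_X_pow_eq_mk_iff.2 fun i hi =>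
      (coeff_sum_smul_X_pow (fun m : Fin N => PowerSeries.coeff (m : ℕ) x) (⟨i, hi⟩ : Fin N)).symm
  rw [hx, map_sum]
  exact Submodule.sum_mem _ fun m _ =>
    Submodule.smul_mem _ _ (Submodule.subset_span (Set.mem_range_self m))

variable (R N) in
/-- The `R`-basis `1, X, …, X ^ (N - 1)` of the truncated power series ring `R⟦X⟧ / (X ^ N)`. -/
def truncatedPowerBasis :
    Module.Basis (Fin N) R (PowerSeries R ⧸ Ideal.span {(PowerSeries.X : PowerSeries R) ^ N}) :=
  .mk linearIndependent_mk_X_pow span_range_mk_X_pow.ge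

theorem truncatedPowerBasis_apply (i : Fin N) :
    truncatedPowerBasis R N i = Ideal.Quotient.mk _ (PowerSeries.X ^ (i : ℕ)) :=
  Module.Basis.mk_apply _ _ i

end TruncatedPowerSeries

theorem monA_mul_monA (n : ℕ) (l m : ℤ) (a b : ℕ) :
    monA n l a * monA n m b = monA n (l + m) (a + b) := by
  rw [monA, monA, monA, ← map_mul, mon, mon, mon, PowerSeries.monomial_mul_monomial,
    LaurentPolynomial.T_add]

theorem monA_eq_zero_of_lt {n i : ℕ} (hi : n < i) (l : ℤ) : monA n l i = 0 := by
  refine (mk_span_X_pow_eq_mk_iff (y := 0)).2 fun m hm => ?_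
  rw [mon, PowerSeries.coeff_monomial, if_neg (by omega), map_zero]

theorem monA_eq_T_smul (n : ℕ) (l : ℤ) (i : ℕ) :
    monA n l i = (LaurentPolynomial.T l : Lz) • toA n (PowerSeries.X ^ i) := by
  have hmon : mon l i = (LaurentPolynomial.T l : Lz) • (PowerSeries.X : Pz) ^ i := by
    rw [mon, PowerSeries.X_pow_eq, ← map_smul, smul_eq_mul, mul_one]
  rw [monA, hmon]
  rfl

/-- The powers `z^l` as a `ℂ`-basis of `ℂ[z,z⁻¹]`. -/
def zPowBasis : Module.Basis ℤ ℂ Lz :=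
  AddMonoidAlgebra.basis ℤ ℂ

theorem zPowBasis_apply (l : ℤ) : zPowBasis l = LaurentPolynomial.T l :=
  AddMonoidAlgebra.basis_apply ..

/-- The powers `u^i` with `0 ≤ i ≤ n` as a `ℂ[z,z⁻¹]`-basis of `A`. -/
def uPowBasis (n : ℕ) : Module.Basis (Fin (n + 1)) Lz (Aq n) :=
  truncatedPowerBasis Lz (n + 1)

theorem uPowBasis_apply (n : ℕ) (i : Fin (n + 1)) :
    uPowBasis n i = toA n (PowerSeries.X ^ (i : ℕ)) :=
  truncatedPowerBasis_apply i

/-- The `ℂ`-basis of `A` formed by the monomials `z^l u^i`, indexed by the exponents `(l, i)` with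
`l ∈ ℤ` and `0 ≤ i ≤ n`. -/
def monBasis (n : ℕ) : Module.Basis (ℤ × Fin (n + 1)) ℂ (Aq n) :=
  zPowBasis.smulTower (uPowBasis n)

theorem monBasis_apply (n : ℕ) (m : ℤ × Fin (n + 1)) : monBasis n m = monA n m.1 m.2 := by
  rw [monBasis, Module.Basis.smulTower_apply, zPowBasis_apply, uPowBasis_apply, monA_eq_T_smul]

/-- The `ℂ`-span in `A` of the monomials `z^l u^i` whose exponents `(l, i)` belong to `S`. -/
def monSpan (n : ℕ) (S : Set (ℤ × Fin (n + 1))) : Submodule ℂ (Aq n) :=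
  Submodule.span ℂ (monBasis n '' S)

section MonomialSpans

variable {n : ℕ} {S T : Set (ℤ × Fin (n + 1))}

theorem monA_mem_monSpan {l : ℤ} {i : ℕ} (hi : i < n + 1) (hS : (l, ⟨i, hi⟩) ∈ S) :
    monA n l i ∈ monSpan n S :=
  Submodule.subset_span ⟨(l, ⟨i, hi⟩), hS, monBasis_apply n _⟩

theorem monSpan_mono (h : S ⊆ T) : monSpan n S ≤ monSpan n T :=
  Submodule.span_mono (Set.image_mono h)

theorem monSpan_union : monSpan n (S ∪ T) = monSpan n S ⊔ monSpan n T := by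
  rw [monSpan, Set.image_union, Submodule.span_union]
  rfl

theorem disjoint_monSpan (h : Disjoint S T) : Disjoint (monSpan n S) (monSpan n T) :=
  (monBasis n).linearIndependent.disjoint_span_image h

theorem span_setOf_monA_eq_monSpan (P : ℤ → ℕ → Prop) :
    Submodule.span ℂ {x | ∃ l : ℤ, ∃ i : ℕ, P l i ∧ i ≤ n ∧ x = monA n l i} =
      monSpan n {m | P m.1 m.2} := by
  refine congrArg (Submodule.span ℂ) (Set.ext fun x => ⟨?_, ?_⟩)
  · rintro ⟨l, i, hP, hi, rfl⟩
    exact ⟨(l, ⟨i, by omega⟩), hP, monBasis_apply n _⟩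
  · rintro ⟨m, hP, rfl⟩
    exact ⟨m.1, m.2, hP, by omega, monBasis_apply n m⟩

theorem msmul_monA_zero_monSpan (a : ℤ) :
    msmul (monA n a 0) (monSpan n S) = monSpan n {m | (m.1 - a, m.2) ∈ S} := by
  have hshift : {m : ℤ × Fin (n + 1) | (m.1 - a, m.2) ∈ S} = (fun m => (a + m.1, m.2)) '' S := by
    ext ⟨l, i⟩
    simp [← eq_sub_iff_add_eq']
  rw [hshift, msmul, monSpan, monSpan, Submodule.map_span, Set.image_image, Set.image_image]
  simp only [LinearMap.mulLeft_apply, monBasis_apply, monA_mul_monA, zero_add]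

end MonomialSpans

theorem restrictScalars_span_monA_zero_one (n : ℕ) :
    (Ideal.span {monA n 0 1}).restrictScalars ℂ = monSpan n {m | 1 ≤ (m.2 : ℕ)} := by
  apply le_antisymm
  · have hmul : (⊤ : Submodule ℂ (Aq n)).map (LinearMap.mulRight ℂ (monA n 0 1)) ≤
        monSpan n {m | 1 ≤ (m.2 : ℕ)} := by
      rw [← (monBasis n).span_eq, Submodule.map_span_le]
      rintro _ ⟨m, rfl⟩
      rw [LinearMap.mulRight_apply, monBasis_apply, monA_mul_monA]
      by_cases hm : (m.2 : ℕ) + 1 < n + 1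
      · exact monA_mem_monSpan hm (Nat.le_add_left 1 _)
      · rw [monA_eq_zero_of_lt (by omega)]
        exact Submodule.zero_mem _
    intro q hq
    obtain ⟨b, rfl⟩ := Ideal.mem_span_singleton'.1 hq
    exact hmul ⟨b, trivial, rfl⟩
  · refine Submodule.span_le.2 ?_
    rintro _ ⟨m, hm, rfl⟩
    refine Ideal.mem_span_singleton'.2 ⟨monA n m.1 (m.2 - 1), ?_⟩
    rw [monA_mul_monA, add_zero, Nat.sub_add_cancel hm, monBasis_apply]

theorem msmul_OU (n : ℕ) (a : ℤ) : msmul (monA n a 0) (OU n) = monSpan n {m | a ≤ m.1} := by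
  rw [OU, span_setOf_monA_eq_monSpan fun l _ => 0 ≤ l, msmul_monA_zero_monSpan]
  simp only [Set.mem_ofPred_eq, sub_nonneg]

theorem msmul_OV (k n : ℕ) (a : ℤ) :
    msmul (monA n a 0) (OV k n) = monSpan n {m | m.1 ≤ k * (m.2 : ℕ) + a} := by
  rw [OV, span_setOf_monA_eq_monSpan fun l i => l ≤ k * i, msmul_monA_zero_monSpan]
  simp only [Set.mem_ofPred_eq, sub_le_iff_le_add]

theorem Rmod_eq_monSpan (k n : ℕ) (j : ℤ) :
    Rmod k n j =
      monSpan n {m | 1 ≤ (m.2 : ℕ) ∧ (k : ℤ) * (m.2 : ℕ) - j + 1 ≤ m.1 ∧ m.1 ≤ j - 1} := by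
  rw [Rmod, ← span_setOf_monA_eq_monSpan fun l i => 1 ≤ i ∧ (k : ℤ) * i - j + 1 ≤ l ∧ l ≤ j - 1]
  simp only [and_assoc, and_left_comm]

theorem disjoint_Rmod_msmul_OU_sup_msmul_OV (k n : ℕ) (j : ℤ) :
    Disjoint (Rmod k n j) (msmul (monA n j 0) (OU n) ⊔ msmul (monA n (-j) 0) (OV k n)) := by
  rw [Rmod_eq_monSpan, msmul_OU, msmul_OV, ← monSpan_union]
  refine disjoint_monSpan (Set.disjoint_left.2 ?_)
  rintro m ⟨-, hlower, hupper⟩ ((hU : j ≤ m.1) | (hV : m.1 ≤ k * (m.2 : ℕ) + -j)) <;>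
    omega

theorem restrictScalars_span_monA_zero_one_le_sup (k n : ℕ) (j : ℤ) :
    (Ideal.span {monA n 0 1}).restrictScalars ℂ ≤
      Rmod k n j ⊔ (msmul (monA n j 0) (OU n) ⊔ msmul (monA n (-j) 0) (OV k n)) := by
  rw [restrictScalars_span_monA_zero_one, Rmod_eq_monSpan, msmul_OU, msmul_OV, ← monSpan_union,
    ← monSpan_union]
  refine monSpan_mono fun m (hm : 1 ≤ (m.2 : ℕ)) => ?_
  simp only [Set.mem_union, Set.mem_ofPred_eq]
  omega

theorem existsUnique_normalForm (k n : ℕ) (j : ℤ) {q : Aq n}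
    (hq : q ∈ Ideal.span {monA n 0 1}) :
    ∃! p : Aq n, p ∈ Rmod k n j ∧
      q - p ∈ msmul (monA n j 0) (OU n) ⊔ msmul (monA n (-j) 0) (OV k n) :=
  existsUnique_mem_and_sub_mem_of_disjoint (disjoint_Rmod_msmul_OU_sup_msmul_OV k n j)
    (restrictScalars_span_monA_zero_one_le_sup k n j hq)

/-- for `j ≥ 1` and every `q` in the ideal `uA` there is a unique `p ∈ R` with
`q − p ∈ z^j·O_U + z^{−j}·O_V`; equivalently there are `f ∈ O_U`, `g ∈ O_V` with
`q = p + z^j·f − z^{−j}·g`, and then `((1,g),(0,1))·M_q = M_p·((1,f),(0,1))`, so every bundle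
with transition matrix `M_q` is isomorphic to `E_p` with `p` in the normal form `R`. -/
theorem statement4 (k n : ℕ) (hk : 1 ≤ k) (hn : 1 ≤ n) (j : ℤ) (hj : 1 ≤ j)
    (q : Aq n) (hq : q ∈ Ideal.span {monA n 0 1}) :
    (∃! p : Aq n, p ∈ Rmod k n j ∧
      q - p ∈ msmul (monA n j 0) (OU n) ⊔ msmul (monA n (-j) 0) (OV k n)) ∧
    (∀ p : Aq n,
      q - p ∈ msmul (monA n j 0) (OU n) ⊔ msmul (monA n (-j) 0) (OV k n) ↔
        ∃ f ∈ OU n, ∃ g ∈ OV k n, q = p + monA n j 0 * f - monA n (-j) 0 * g) ∧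
    (∀ p f g : Aq n, f ∈ OU n → g ∈ OV k n →
      q = p + monA n j 0 * f - monA n (-j) 0 * g →
      !![1, g; 0, 1] * Mmat n j q = Mmat n j p * !![1, f; 0, 1]) :=
  ⟨existsUnique_normalForm k n j hq,
    fun _ => sub_mem_map_sup_map_iff,
    fun p f g _ _ hqp => unitriangular_mul_eq_mul_unitriangular_iff.2 <| by rw [hqp]; ring⟩
end
end

section
/- Fix an integer j ≥ 1. For every q in the ideal u·P of P there exists a unique element p of the (finite-dimensional) ℂ-span of the monomials z^l u^i with i ≥ 1 and k·i − j + 1 ≤ l ≤ j − 1, such that q − p ∈ z^j·O_U^∞ + z^{−j}·O_V^∞. (This is the normal-form lemma for transition matrices of extensions of O(j) by O(−j) on the formal neighborhood Ẑ_k: every such extension class has a unique representative in the finite-dimensional space of normal forms.) -/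
set_option synthInstance.maxHeartbeats 1000000
set_option maxHeartbeats 1000000

noncomputable section

/-- The coefficient of `z^l` in a Laurent polynomial, as a `ℂ`-linear map. -/
def coeffL (l : ℤ) : Lz →ₗ[ℂ] ℂ :=
  (Finsupp.lapply l).comp (AddMonoidAlgebra.coeffLinearEquiv ℂ).toLinearMap

/-- The coefficient of `z^l u^i` in an element of `P`, as a `ℂ`-linear map. -/
def coeffP (l : ℤ) (i : ℕ) : Pz →ₗ[ℂ] ℂ :=
  (coeffL l).comp ((PowerSeries.coeff (R := Lz) i).restrictScalars ℂ)

/-- `O_U^∞ ⊆ P`: elements whose `u^i`-coefficient, for every `i`, is supported in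
`z`-degrees `≥ 0`. -/
def OUinf : Submodule ℂ Pz where
  carrier := {f | ∀ (i : ℕ) (l : ℤ), l < 0 → coeffP l i f = 0}
  add_mem' := by
    intro f g hf hg i l hl
    simp only [Set.mem_setOf_eq] at *
    rw [map_add, hf i l hl, hg i l hl, add_zero]
  zero_mem' := by intro i l _; simp
  smul_mem' := by
    intro c f hf i l hl
    simp only [Set.mem_setOf_eq] at *
    rw [map_smul, hf i l hl, smul_zero]

/-- `O_V^∞ ⊆ P`: elements whose `u^i`-coefficient, for every `i`, is supported in
`z`-degrees `≤ k·i`. -/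
def OVinf (k : ℕ) : Submodule ℂ Pz where
  carrier := {f | ∀ (i : ℕ) (l : ℤ), (k : ℤ) * i < l → coeffP l i f = 0}
  add_mem' := by
    intro f g hf hg i l hl
    simp only [Set.mem_setOf_eq] at *
    rw [map_add, hf i l hl, hg i l hl, add_zero]
  zero_mem' := by intro i l _; simp
  smul_mem' := by
    intro c f hf i l hl
    simp only [Set.mem_setOf_eq] at *
    rw [map_smul, hf i l hl, smul_zero]

/-- The submodule `a·S` obtained from a submodule `S ⊆ P` by multiplying by `a`. -/
def msmulP (a : Pz) (S : Submodule ℂ Pz) : Submodule ℂ Pz :=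
  Submodule.map (LinearMap.mulLeft ℂ a) S

/-!
Membership in `z^a·O_U^∞ + z^{-b}·O_V^∞` is a condition on coefficients alone: the monomial
`z^l u^i` survives in the quotient exactly when `k·i - b < l < a`, since everything in degrees
`l ≥ a` is absorbed by the first summand and everything in degrees `l ≤ k·i - b` by the second.
As `k ≥ 1`, only finitely many monomials with `i ≥ 1` survive. On their span the corresponding
coefficients are coordinates, so prescribing them determines exactly one normal form.
-/

section Biorthogonal

variable {R M ι : Type*} [Semiring R] [AddCommMonoid M] [Module R M] [DecidableEq ι]
  {v : ι → M} {φ : ι → M →ₗ[R] R}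

theorem apply_sum_smul_of_biorthogonal [Fintype ι]
    (h : ∀ i j, φ i (v j) = if i = j then 1 else 0) (c : ι → R) (i : ι) :
    φ i (∑ j, c j • v j) = c i := by
  simp [h]

theorem existsUnique_mem_span_range_of_biorthogonal [Finite ι]
    (h : ∀ i j, φ i (v j) = if i = j then 1 else 0) (q : M) :
    ∃! p, p ∈ Submodule.span R (Set.range v) ∧ ∀ i, φ i p = φ i q := by
  have := Fintype.ofFinite ι
  refine ⟨∑ i, φ i q • v i, ⟨?_, apply_sum_smul_of_biorthogonal h _⟩, ?_⟩
  · exact (Submodule.mem_span_range_iff_exists_fun R).2 ⟨_, rfl⟩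
  · rintro p ⟨hp, hpq⟩
    obtain ⟨c, rfl⟩ := (Submodule.mem_span_range_iff_exists_fun R).1 hp
    simp only [apply_sum_smul_of_biorthogonal h] at hpq
    simp only [hpq]

end Biorthogonal

theorem coeffL_T_mul (l a : ℤ) (f : Lz) :
    coeffL l (LaurentPolynomial.T a * f) = coeffL (l - a) f := by
  refine (AddMonoidAlgebra.coeff_single_mul_apply f (1 : ℂ) a l).trans ?_
  rw [one_mul, neg_add_eq_sub]
  rfl

theorem coeffP_mon (l m : ℤ) (i n : ℕ) :
    coeffP l i (mon m n) = if (l, i) = (m, n) then 1 else 0 := by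
  have coeffL_T : coeffL l (LaurentPolynomial.T m) = if m = l then 1 else 0 :=
    LaurentPolynomial.T_apply l m
  by_cases hi : i = n <;>
    simp [coeffP, mon, PowerSeries.coeff_monomial, coeffL_T, hi, eq_comm]

theorem coeffP_mon_mul (l a : ℤ) (i : ℕ) (f : Pz) :
    coeffP l i (mon a 0 * f) = coeffP (l - a) i f := by
  simp only [coeffP, mon, LinearMap.comp_apply, LinearMap.restrictScalars_apply,
    PowerSeries.monomial_zero_eq_C_apply, PowerSeries.coeff_C_mul, coeffL_T_mul]

theorem mon_mul_mon (l m : ℤ) (i n : ℕ) : mon l i * mon m n = mon (l + m) (i + n) := by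
  rw [mon, mon, mon, PowerSeries.monomial_mul_monomial, LaurentPolynomial.T_add]

theorem mon_zero_zero : mon 0 0 = 1 := by
  simp [mon]

theorem mem_msmulP_mon_iff (a : ℤ) (S : Submodule ℂ Pz) (f : Pz) :
    f ∈ msmulP (mon a 0) S ↔ mon (-a) 0 * f ∈ S := by
  constructor
  · rintro ⟨g, hg, rfl⟩
    rwa [LinearMap.mulLeft_apply, ← mul_assoc, mon_mul_mon, neg_add_cancel, mon_zero_zero, one_mul]
  · refine fun hf => ⟨mon (-a) 0 * f, hf, ?_⟩
    rw [LinearMap.mulLeft_apply, ← mul_assoc, mon_mul_mon, add_neg_cancel, mon_zero_zero, one_mul]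

theorem mem_msmulP_mon_OUinf_iff (a : ℤ) (f : Pz) :
    f ∈ msmulP (mon a 0) OUinf ↔ ∀ (i : ℕ) (l : ℤ), l < a → coeffP l i f = 0 := by
  rw [mem_msmulP_mon_iff]
  change (∀ (i : ℕ) (l : ℤ), l < 0 → coeffP l i (mon (-a) 0 * f) = 0) ↔ _
  simp only [coeffP_mon_mul, sub_neg_eq_add]
  refine forall_congr' fun i => ⟨fun h l hl => ?_, fun h l hl => h (l + a) (by omega)⟩
  simpa using h (l - a) (by omega)

theorem mem_msmulP_mon_OVinf_iff (k : ℕ) (a : ℤ) (f : Pz) :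
    f ∈ msmulP (mon a 0) (OVinf k) ↔
      ∀ (i : ℕ) (l : ℤ), (k : ℤ) * i + a < l → coeffP l i f = 0 := by
  rw [mem_msmulP_mon_iff]
  change (∀ (i : ℕ) (l : ℤ), (k : ℤ) * i < l → coeffP l i (mon (-a) 0 * f) = 0) ↔ _
  simp only [coeffP_mon_mul, sub_neg_eq_add]
  refine forall_congr' fun i => ⟨fun h l hl => ?_, fun h l hl => h (l + a) (by omega)⟩
  simpa using h (l - a) (by omega)

theorem exists_coeffP_eq_ite (S : ℤ → ℕ → Prop) [∀ l i, Decidable (S l i)] (f : Pz) :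
    ∃ g : Pz, ∀ l i, coeffP l i g = if S l i then coeffP l i f else 0 := by
  refine ⟨PowerSeries.mk fun i =>
    .ofCoeff ((PowerSeries.coeff i f).coeff.filter (S · i)), fun l i => ?_⟩
  simp only [coeffP, LinearMap.comp_apply, LinearMap.restrictScalars_apply, PowerSeries.coeff_mk]
  exact Finsupp.filter_apply (S · i) _ l

theorem mem_msmulP_OUinf_sup_msmulP_OVinf_iff (k : ℕ) (a b : ℤ) (f : Pz) :
    f ∈ msmulP (mon a 0) OUinf ⊔ msmulP (mon (-b) 0) (OVinf k) ↔
      ∀ (i : ℕ) (l : ℤ), (k : ℤ) * i - b < l → l < a → coeffP l i f = 0 := by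
  constructor
  · intro hf i l hbl hla
    obtain ⟨g, hg, h, hh, rfl⟩ := Submodule.mem_sup.1 hf
    rw [map_add, (mem_msmulP_mon_OUinf_iff a g).1 hg i l hla,
      (mem_msmulP_mon_OVinf_iff k (-b) h).1 hh i l hbl, add_zero]
  · intro hf
    obtain ⟨g, hg⟩ := exists_coeffP_eq_ite (fun l _ => a ≤ l) f
    have g_mem : g ∈ msmulP (mon a 0) OUinf :=
      (mem_msmulP_mon_OUinf_iff a g).2 fun i l hla => by rw [hg, if_neg hla.not_ge]
    have sub_mem : f - g ∈ msmulP (mon (-b) 0) (OVinf k) := by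
      refine (mem_msmulP_mon_OVinf_iff k (-b) _).2 fun i l hbl => ?_
      rw [map_sub, hg]
      split_ifs with hal
      · exact sub_self _
      · rw [hf i l hbl (not_le.1 hal), sub_zero]
    exact Submodule.mem_sup.2 ⟨g, g_mem, f - g, sub_mem, add_sub_cancel g f⟩

theorem coeffP_zero_of_mem_span_X {f : Pz} (hf : f ∈ Ideal.span {(PowerSeries.X : Pz)}) (l : ℤ) :
    coeffP l 0 f = 0 := by
  rw [Ideal.mem_span_singleton, PowerSeries.X_dvd_iff] at hf
  simp [coeffP, hf]

theorem mon_mem_span_X (l : ℤ) {i : ℕ} (hi : 1 ≤ i) :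
    mon l i ∈ Ideal.span {(PowerSeries.X : Pz)} := by
  rw [Ideal.mem_span_singleton, PowerSeries.X_dvd_iff, mon,
    ← PowerSeries.coeff_zero_eq_constantCoeff_apply, PowerSeries.coeff_monomial, if_neg (by omega)]

/-- The exponents `(l, i)` of the monomials `z^l u^i` occurring in normal forms modulo
`z^a·O_U^∞ + z^{-b}·O_V^∞`, for power series without constant term in `u`. -/
def normalFormExponents (k : ℕ) (a b : ℤ) : Set (ℤ × ℕ) :=
  {x | 1 ≤ x.2 ∧ (k : ℤ) * x.2 - b + 1 ≤ x.1 ∧ x.1 ≤ a - 1}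

theorem finite_normalFormExponents {k : ℕ} (hk : 1 ≤ k) (a b : ℤ) :
    (normalFormExponents k a b).Finite := by
  refine ((Set.finite_Ioo (-b) a).prod (Set.finite_Iio (a + b).toNat)).subset ?_
  rintro ⟨l, i⟩ ⟨hi, hbl, hla⟩
  have hki : (i : ℤ) ≤ k * i := le_mul_of_one_le_left (by positivity) (by exact_mod_cast hk)
  dsimp only at hi hbl hla
  simp only [Set.mem_prod, Set.mem_Ioo, Set.mem_Iio]
  omega

theorem range_mon_normalFormExponents (k : ℕ) (a b : ℤ) :
    Set.range (fun x : normalFormExponents k a b => mon x.1.1 x.1.2) =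
      {x | ∃ l : ℤ, ∃ i : ℕ, 1 ≤ i ∧ (k : ℤ) * i - b + 1 ≤ l ∧ l ≤ a - 1 ∧ x = mon l i} := by
  ext x
  simp [normalFormExponents, eq_comm, and_assoc]

theorem span_mon_normalFormExponents_le (k : ℕ) (a b : ℤ) :
    Submodule.span ℂ (Set.range fun x : normalFormExponents k a b => mon x.1.1 x.1.2) ≤
      (Ideal.span {(PowerSeries.X : Pz)}).restrictScalars ℂ := by
  rw [Submodule.span_le]
  rintro _ ⟨x, rfl⟩
  exact mon_mem_span_X _ x.2.1

theorem mem_sup_iff_of_mem_span_X (k : ℕ) (a b : ℤ) {f : Pz}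
    (hf : f ∈ Ideal.span {(PowerSeries.X : Pz)}) :
    f ∈ msmulP (mon a 0) OUinf ⊔ msmulP (mon (-b) 0) (OVinf k) ↔
      ∀ x : normalFormExponents k a b, coeffP x.1.1 x.1.2 f = 0 := by
  rw [mem_msmulP_OUinf_sup_msmulP_OVinf_iff]
  constructor
  · rintro h ⟨⟨l, i⟩, -, hbl, hla⟩
    exact h i l (by dsimp only at hbl; omega) (by dsimp only at hla; omega)
  · intro h i l hbl hla
    rcases Nat.eq_zero_or_pos i with rfl | hi
    · exact coeffP_zero_of_mem_span_X hf l
    · exact h ⟨(l, i), hi, by dsimp only; omega, by dsimp only; omega⟩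

/-- With `z^a` and `z^{-b}` as diagonal entries of the transition matrix, this is the normal form
for extensions of `O(b)` by `O(-a)`. -/
theorem statement5_general (k : ℕ) (hk : 1 ≤ k) (a b : ℤ)
    (q : Pz) (hq : q ∈ Ideal.span {(PowerSeries.X : Pz)}) :
    ∃! p : Pz,
      p ∈ Submodule.span ℂ
        {x | ∃ l : ℤ, ∃ i : ℕ, 1 ≤ i ∧ (k : ℤ) * i - b + 1 ≤ l ∧ l ≤ a - 1 ∧ x = mon l i} ∧
      q - p ∈ msmulP (mon a 0) OUinf ⊔ msmulP (mon (-b) 0) (OVinf k) := by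
  rw [← range_mon_normalFormExponents]
  have : Finite (normalFormExponents k a b) := finite_normalFormExponents hk a b
  have biorthogonal : ∀ x y : normalFormExponents k a b,
      coeffP x.1.1 x.1.2 (mon y.1.1 y.1.2) = if x = y then 1 else 0 := fun x y => by
    simp only [coeffP_mon, Subtype.ext_iff]
  refine (existsUnique_congr fun p => and_congr_right fun hp => ?_).1
    (existsUnique_mem_span_range_of_biorthogonal biorthogonal q)
  rw [mem_sup_iff_of_mem_span_X k a b (sub_mem hq (span_mon_normalFormExponents_le k a b hp))]
  simp only [map_sub, sub_eq_zero, eq_comm (b := coeffP _ _ p)]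

/-- for `j ≥ 1` and every `q` in the ideal `u·P` there is a unique element `p` of
the (finite-dimensional) `ℂ`-span of the monomials `z^l u^i` with `i ≥ 1` and
`k·i − j + 1 ≤ l ≤ j − 1` such that `q − p ∈ z^j·O_U^∞ + z^{−j}·O_V^∞`. -/
theorem statement5 (k : ℕ) (hk : 1 ≤ k) (j : ℤ) (hj : 1 ≤ j)
    (q : Pz) (hq : q ∈ Ideal.span {(PowerSeries.X : Pz)}) :
    ∃! p : Pz,
      p ∈ Submodule.span ℂ
        {x | ∃ l : ℤ, ∃ i : ℕ, 1 ≤ i ∧ (k : ℤ) * i - j + 1 ≤ l ∧ l ≤ j - 1 ∧ x = mon l i} ∧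
      q - p ∈ msmulP (mon j 0) OUinf ⊔ msmulP (mon (-j) 0) (OVinf k) :=
  statement5_general k hk j j q hq
end
end

section
/- Let Φ : ℂ[[x₀, x₁, …, x_k]] → P be the continuous ℂ-algebra homomorphism from the formal power series ring in k+1 variables given by substituting x_i ↦ z^i·u for 0 ≤ i ≤ k (this substitution is well defined since each z^i·u lies in the ideal u·P). Then the image of Φ is exactly the subalgebra O_U^∞ ∩ O_V^∞ (the ring of global functions on the formal neighborhood Ẑ_k), and the kernel of Φ is the ideal of ℂ[[x₀, …, x_k]] generated by the elements x_i·x_j − x_{i+1}·x_{j−1} for 0 ≤ i ≤ k − 2 and i + 2 ≤ j ≤ k. In particular the ring of global functions on Ẑ_k is isomorphic to ℂ[[x₀,…,x_k]] modulo that ideal. -/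
set_option synthInstance.maxHeartbeats 1000000
set_option maxHeartbeats 1000000

noncomputable section

/-!
The monomial `x^m` is sent to `z^(∑ i * mᵢ) u^|m|`, so `Φ f` is found by summing the coefficients
of `f` over the finitely many exponents of each bidegree `(N, l) = (|m|, ∑ i * mᵢ)`. A bidegree is
attained exactly when `0 ≤ l ≤ k * N`, which gives the image, and `f` lies in the kernel exactly
when all these sums vanish. Modulo the quadrics `x_i x_j - x_{i+1} x_{j-1}` two monomials of the
same bidegree agree, because both can be rewritten to the normal form with as many factors `x_k`
as possible; hence every homogeneous component of a kernel element lies in the ideal. Infinitely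
many components are handled at once because the ideal has finitely many homogeneous generators:
the coefficients of the components with respect to them assemble into power series.
-/

section HomogeneousIdeal

open MvPowerSeries

variable {σ R : Type*}

theorem mem_span_of_forall_homogeneousComponent_mem [CommSemiring R]
    {S : Set (MvPowerSeries σ R)} (hfin : S.Finite) (hhom : ∀ g ∈ S, ∃ d, g.IsHomogeneous d)
    {f : MvPowerSeries σ R} (hf : ∀ N, homogeneousComponent N f ∈ Ideal.span S) :
    f ∈ Ideal.span S := by
  classical
  have := hfin.fintype
  choose d hd using fun g : S => hhom g g.2
  rw [← Subtype.range_coe (s := S)] at hf ⊢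
  choose a ha using fun N => Ideal.mem_span_range_iff_exists_fun.1 (hf N)
  let b : S → MvPowerSeries σ R := fun g m => coeff m (a (m.degree + d g) g)
  refine Ideal.mem_span_range_iff_exists_fun.2 ⟨b, ?_⟩
  ext m
  have hm : coeff m f = coeff m (∑ g, a m.degree g * (g : MvPowerSeries σ R)) := by
    rw [ha, coeff_homogeneousComponent, if_pos rfl]
  simp only [hm, map_sum, coeff_mul]
  refine Finset.sum_congr rfl fun g _ => Finset.sum_congr rfl fun p hp => ?_
  by_cases hdeg : p.2.degree = d g
  · have hsum : p.1.degree + d g = m.degree := by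
      rw [← hdeg, ← map_add, Finset.HasAntidiagonal.mem_antidiagonal.1 hp]
    change coeff p.1 (a (p.1.degree + d g) g) * _ = _
    rw [hsum]
  · rw [IsHomogeneous.coeff_eq_zero (hd g) hdeg, mul_zero, mul_zero]

theorem mem_finsuppAntidiag_univ [Fintype σ] [DecidableEq σ] {N : ℕ} {m : σ →₀ ℕ} :
    m ∈ Finset.finsuppAntidiag Finset.univ N ↔ m.degree = N := by
  simp [Finsupp.degree_eq_sum]

theorem homogeneousComponent_eq_sum_monomial [Semiring R] [Fintype σ] [DecidableEq σ]
    (f : MvPowerSeries σ R) (N : ℕ) : homogeneousComponent N f =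
      ∑ m ∈ Finset.finsuppAntidiag Finset.univ N, monomial m (coeff m f) := by
  ext m
  simp only [map_sum, coeff_homogeneousComponent, coeff_monomial, Finset.sum_ite_eq,
    mem_finsuppAntidiag_univ]

theorem isHomogeneous_X [Semiring R] (i : σ) : (X i : MvPowerSeries σ R).IsHomogeneous 1 := by
  classical
  intro m hm
  rw [X_def] at hm
  simp [eq_of_coeff_monomial_ne_zero hm, Finsupp.weight_single]

variable [CommRing R]

/-- The additive congruence on exponents that relates `m` and `m'` when the monomials `x^m` and
`x^m'` agree modulo the ideal `I`. -/
def monomialCon (I : Ideal (MvPowerSeries σ R)) : AddCon (σ →₀ ℕ) where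
  toSetoid := Setoid.ker fun m => Ideal.Quotient.mk I (monomial m 1)
  add' {m₁ m₁' m₂ m₂'} h₁ h₂ := by
    have hmul (m n : σ →₀ ℕ) : (monomial (m + n) 1 : MvPowerSeries σ R) =
        monomial m 1 * monomial n 1 := by
      rw [monomial_mul_monomial, mul_one]
    simp only [Setoid.ker_def] at h₁ h₂ ⊢
    rw [hmul, hmul, map_mul, map_mul, h₁, h₂]

theorem mk_monomial_eq_of_monomialCon {I : Ideal (MvPowerSeries σ R)} {m m' : σ →₀ ℕ}
    (h : monomialCon I m m') (a : R) :
    Ideal.Quotient.mk I (monomial m a) = Ideal.Quotient.mk I (monomial m' a) := by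
  have hC (n : σ →₀ ℕ) : (monomial n a : MvPowerSeries σ R) = C a * monomial n 1 := by
    rw [← monomial_zero_eq_C_apply, monomial_mul_monomial, zero_add, mul_one]
  have h' : Ideal.Quotient.mk I (monomial m 1) = Ideal.Quotient.mk I (monomial m' 1) := h
  rw [hC, hC, map_mul, map_mul, h']

end HomogeneousIdeal

section Exponents

open Finsupp

variable {k : ℕ}

/-- The exponent of `z` in the image `z^(∑ i * mᵢ) u^|m|` of the monomial `x^m`. -/
def zDegree : (Fin (k + 1) →₀ ℕ) →+ ℕ :=
  weight Fin.val

theorem zDegree_single_one (i : Fin (k + 1)) : zDegree (single i 1) = i := by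
  simp [zDegree, weight_single]

theorem zDegree_eq_sum (m : Fin (k + 1) →₀ ℕ) : zDegree m = ∑ i : Fin (k + 1), (i : ℕ) * m i := by
  simp [zDegree, weight_eq_sum, mul_comm]

theorem zDegree_le (m : Fin (k + 1) →₀ ℕ) : zDegree m ≤ k * m.degree := by
  rw [zDegree_eq_sum, degree_eq_sum, Finset.mul_sum]
  exact Finset.sum_le_sum fun i _ => Nat.mul_le_mul_right _ (Nat.lt_succ_iff.1 i.2)

/-- The exponents `m` for which `x^m` is sent to `z^l u^N`. -/
def bidegreeFiber (k N l : ℕ) : Finset (Fin (k + 1) →₀ ℕ) :=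
  {m ∈ Finset.finsuppAntidiag Finset.univ N | zDegree m = l}

theorem mem_bidegreeFiber {N l : ℕ} {m : Fin (k + 1) →₀ ℕ} :
    m ∈ bidegreeFiber k N l ↔ m.degree = N ∧ zDegree m = l := by
  rw [bidegreeFiber, Finset.mem_filter, mem_finsuppAntidiag_univ]

/-- The normal form among the exponents of bidegree `(N, l)`: each of the `N` factors in turn
is the variable of largest index that the remaining weight allows. Its `zDegree` is `l` only when
`l ≤ k * N`; for larger `l` the excess is discarded. -/
def greedyExponent (k : ℕ) : ℕ → ℕ → (Fin (k + 1) →₀ ℕ)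
  | 0, _ => 0
  | N + 1, l => single ⟨min l k, by omega⟩ 1 + greedyExponent k N (l - min l k)

theorem degree_greedyExponent (N l : ℕ) : (greedyExponent k N l).degree = N := by
  induction N generalizing l with
  | zero => simp [greedyExponent]
  | succ N ih => rw [greedyExponent, map_add, degree_single, ih, add_comm]

theorem zDegree_greedyExponent {N l : ℕ} (hl : l ≤ k * N) :
    zDegree (greedyExponent k N l) = l := by
  induction N generalizing l with
  | zero => simp_all [greedyExponent]
  | succ N ih =>
    rw [mul_add_one] at hl
    rw [greedyExponent, map_add, zDegree_single_one, ih (by omega), Fin.val_mk]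
    omega

theorem exists_forall_sum_bidegreeFiber_coeff_eq {R : Type*} [Semiring R] (c : ℕ → ℕ → R) :
    ∃ f : MvPowerSeries (Fin (k + 1)) R, ∀ N l, l ≤ k * N →
      ∑ m ∈ bidegreeFiber k N l, MvPowerSeries.coeff m f = c N l := by
  classical
  let f : MvPowerSeries (Fin (k + 1)) R := fun m =>
    if m = greedyExponent k m.degree (zDegree m) then c m.degree (zDegree m) else 0
  have hf {N l : ℕ} {m : Fin (k + 1) →₀ ℕ} (hm : m ∈ bidegreeFiber k N l) :
      MvPowerSeries.coeff m f = if m = greedyExponent k N l then c N l else 0 := by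
    obtain ⟨rfl, rfl⟩ := mem_bidegreeFiber.1 hm
    rfl
  refine ⟨f, fun N l hl => ?_⟩
  rw [Finset.sum_congr rfl fun m => hf, Finset.sum_ite_eq', if_pos]
  exact mem_bidegreeFiber.2 ⟨degree_greedyExponent N l, zDegree_greedyExponent hl⟩

/-- An additive congruence on exponents containing the relations `x_i x_j ∼ x_{i+1} x_{j-1}`;
the indices `i + 1` and `j - 1` are the variables `i'` and `j'`. -/
def IsExchangeCon (c : AddCon (Fin (k + 1) →₀ ℕ)) : Prop :=
  ∀ ⦃i i' j' j : Fin (k + 1)⦄, (i' : ℕ) = i + 1 → (j : ℕ) = j' + 1 → i' ≤ j' →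
    c (single i 1 + single j 1) (single i' 1 + single j' 1)

variable {c : AddCon (Fin (k + 1) →₀ ℕ)}

theorem IsExchangeCon.single_add_single_of_le (hc : IsExchangeCon c) {i i' j' j : Fin (k + 1)}
    (hi : i ≤ i') (hij : i' ≤ j') (hsum : (i + j : ℕ) = i' + j') :
    c (single i 1 + single j 1) (single i' 1 + single j' 1) := by
  obtain ⟨n, hn⟩ := Nat.exists_eq_add_of_le (Fin.le_def.1 hi)
  induction n generalizing i j with
  | zero =>
    obtain rfl : i' = i := Fin.ext (by omega)
    obtain rfl : j' = j := Fin.ext (by omega)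
    exact c.refl _
  | succ n ih =>
    let i₁ : Fin (k + 1) := ⟨i + 1, by omega⟩
    let j₁ : Fin (k + 1) := ⟨j - 1, by omega⟩
    have hi₁ : (i₁ : ℕ) = i + 1 := rfl
    have hj₁ : (j : ℕ) = j₁ + 1 := by simp only [j₁]; omega
    exact c.trans (hc hi₁ hj₁ (by omega)) (ih (by omega) (by omega) (by omega))

theorem IsExchangeCon.single_add_single (hc : IsExchangeCon c) {i j i' j' : Fin (k + 1)}
    (hsum : (i + j : ℕ) = i' + j') :
    c (single i 1 + single j 1) (single i' 1 + single j' 1) := by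
  wlog hij : i ≤ j generalizing i j
  · rw [add_comm (single i 1)]
    exact this (by omega) (le_of_not_ge hij)
  wlog hij' : i' ≤ j' generalizing i' j'
  · rw [add_comm (single i' 1)]
    exact this (by omega) (le_of_not_ge hij')
  rcases le_total i i' with h | h
  · exact hc.single_add_single_of_le h hij' hsum
  · exact c.symm (hc.single_add_single_of_le h hij hsum.symm)

theorem IsExchangeCon.single_add_greedyExponent (hc : IsExchangeCon c) {N l : ℕ}
    (hl : l ≤ k * N) (i : Fin (k + 1)) :
    c (single i 1 + greedyExponent k N l) (greedyExponent k (N + 1) (i + l)) := by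
  induction N generalizing l i with
  | zero =>
    obtain rfl : l = 0 := by simpa using hl
    have hi : (⟨min (i + 0) k, by omega⟩ : Fin (k + 1)) = i := Fin.ext (by dsimp only; omega)
    simp only [greedyExponent, hi]
    exact c.refl _
  | succ N ih =>
    rw [mul_add_one] at hl
    let t : Fin (k + 1) := ⟨min l k, by omega⟩
    let t' : Fin (k + 1) := ⟨min (i + l) k, by omega⟩
    let r : Fin (k + 1) := ⟨i + t - t', by simp only [t, t']; omega⟩
    have hsum : (i + t : ℕ) = t' + r := by simp only [t, t', r]; omega
    have hrest : r + (l - t) = i + l - t' := by simp only [t, t', r]; omega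
    have hbound : l - t ≤ k * N := by simp only [t]; omega
    have hexchange := c.add (hc.single_add_single hsum) (c.refl (greedyExponent k N (l - t)))
    have hih := c.add (c.refl (single t' 1)) (ih hbound r)
    rw [hrest, ← add_assoc] at hih
    rw [greedyExponent, greedyExponent, ← add_assoc]
    exact c.trans hexchange hih

theorem IsExchangeCon.greedyExponent_right (hc : IsExchangeCon c) (m : Fin (k + 1) →₀ ℕ) :
    c m (greedyExponent k m.degree (zDegree m)) := by
  induction hN : m.degree generalizing m with
  | zero =>
    rw [(degree_eq_zero_iff m).1 hN]
    exact c.refl _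
  | succ N ih =>
    obtain ⟨i, hi⟩ : ∃ i, m i ≠ 0 := by
      by_contra! h
      simp [degree_eq_sum, h] at hN
    obtain ⟨m', rfl⟩ : ∃ m', m = single i 1 + m' :=
      ⟨m - single i 1, by rw [add_comm (single i 1), sub_add_single_one_cancel hi]⟩
    have hN' : m'.degree = N := by
      rw [map_add, degree_single] at hN
      omega
    rw [map_add zDegree, zDegree_single_one]
    exact c.trans (c.add (c.refl _) (ih m' hN'))
      (hc.single_add_greedyExponent (hN' ▸ zDegree_le m') i)

end Exponents

section Quadrics

open MvPowerSeries

variable {k : ℕ} {R : Type*} [CommRing R]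

/-- The quadrics `x_i x_j - x_{i+1} x_{j-1}` cutting out the cone over the rational normal curve
of degree `k`; as in `IsExchangeCon`, `i'` and `j'` stand for `i + 1` and `j - 1`. -/
def exchangeQuadrics (k : ℕ) (R : Type*) [CommRing R] : Set (MvPowerSeries (Fin (k + 1)) R) :=
  {f | ∃ i i' j' j : Fin (k + 1), (i' : ℕ) = i + 1 ∧ (j : ℕ) = j' + 1 ∧ i' ≤ j' ∧
    f = X i * X j - X i' * X j'}

theorem finite_exchangeQuadrics : (exchangeQuadrics k R).Finite := by
  refine (Set.finite_range fun p : (Fin (k + 1) × Fin (k + 1)) × (Fin (k + 1) × Fin (k + 1)) =>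
    (X p.1.1 * X p.1.2 - X p.2.1 * X p.2.2 : MvPowerSeries (Fin (k + 1)) R)).subset ?_
  rintro _ ⟨i, i', j', j, _, _, _, rfl⟩
  exact ⟨((i, j), (i', j')), rfl⟩

theorem isHomogeneous_of_mem_exchangeQuadrics {g : MvPowerSeries (Fin (k + 1)) R}
    (hg : g ∈ exchangeQuadrics k R) : g.IsHomogeneous 2 := by
  obtain ⟨i, i', j', j, -, -, -, rfl⟩ := hg
  have hXX (a b : Fin (k + 1)) : (X a * X b : MvPowerSeries (Fin (k + 1)) R).IsHomogeneous 2 :=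
    IsHomogeneous.mul (isHomogeneous_X a) (isHomogeneous_X b)
  intro m hm
  by_contra hdeg
  refine hm ?_
  rw [map_sub, IsWeightedHomogeneous.coeff_eq_zero (hXX _ _) hdeg,
    IsWeightedHomogeneous.coeff_eq_zero (hXX _ _) hdeg, sub_zero]

theorem isExchangeCon_monomialCon :
    IsExchangeCon (monomialCon (Ideal.span (exchangeQuadrics k R))) := by
  intro i i' j' j hi hj hij
  have hXX (a b : Fin (k + 1)) : (monomial (Finsupp.single a 1 + Finsupp.single b 1) 1 :
      MvPowerSeries (Fin (k + 1)) R) = X a * X b := by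
    rw [X_def, X_def, monomial_mul_monomial, mul_one]
  refine Ideal.Quotient.eq.2 (Ideal.subset_span ⟨i, i', j', j, hi, hj, hij, ?_⟩)
  rw [hXX, hXX]

theorem mem_span_exchangeQuadrics_of_sum_coeff_eq_zero {f : MvPowerSeries (Fin (k + 1)) R}
    (hf : ∀ N l, ∑ m ∈ bidegreeFiber k N l, coeff m f = 0) :
    f ∈ Ideal.span (exchangeQuadrics k R) := by
  refine mem_span_of_forall_homogeneousComponent_mem finite_exchangeQuadrics
    (fun g hg => ⟨2, isHomogeneous_of_mem_exchangeQuadrics hg⟩) fun N => ?_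
  set q := Ideal.Quotient.mk (Ideal.span (exchangeQuadrics k R))
  have hmaps : ∀ m ∈ Finset.finsuppAntidiag Finset.univ N,
      zDegree (k := k) m ∈ Finset.range (k * N + 1) := fun m hm =>
    Finset.mem_range_succ_iff.2 (mem_finsuppAntidiag_univ.1 hm ▸ zDegree_le m)
  rw [← Ideal.Quotient.eq_zero_iff_mem]
  calc q (homogeneousComponent N f)
      = ∑ m ∈ Finset.finsuppAntidiag Finset.univ N, q (monomial m (coeff m f)) := by
        rw [homogeneousComponent_eq_sum_monomial, map_sum]
    _ = ∑ l ∈ Finset.range (k * N + 1), ∑ m ∈ bidegreeFiber k N l, q (monomial m (coeff m f)) :=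
        (Finset.sum_fiberwise_of_maps_to hmaps _).symm
    _ = ∑ l ∈ Finset.range (k * N + 1), ∑ m ∈ bidegreeFiber k N l,
          q (monomial (greedyExponent k N l) (coeff m f)) := by
        refine Finset.sum_congr rfl fun l _ => Finset.sum_congr rfl fun m hm => ?_
        obtain ⟨rfl, rfl⟩ := mem_bidegreeFiber.1 hm
        exact mk_monomial_eq_of_monomialCon (isExchangeCon_monomialCon.greedyExponent_right m) _
    _ = 0 := Finset.sum_eq_zero fun l _ => by
        rw [← map_sum, ← map_sum, hf, map_zero, map_zero]

end Quadrics

section GlobalFunctions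

variable {k : ℕ}

theorem coeffL_T (l l' : ℤ) : coeffL l (LaurentPolynomial.T l') = if l' = l then 1 else 0 :=
  Finsupp.single_apply

theorem eq_of_forall_coeffP_eq {p q : Pz} (h : ∀ l N, coeffP l N p = coeffP l N q) : p = q := by
  ext1 N
  exact LaurentPolynomial.ext fun l => h l N

theorem eq_of_mem_OUinf_inf_OVinf {p q : Pz} (hp : p ∈ OUinf ⊓ OVinf k) (hq : q ∈ OUinf ⊓ OVinf k)
    (h : ∀ N l : ℕ, l ≤ k * N → coeffP l N p = coeffP l N q) : p = q := by
  refine eq_of_forall_coeffP_eq fun l N => ?_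
  rcases lt_or_ge l 0 with hneg | hnonneg
  · rw [hp.1 N l hneg, hq.1 N l hneg]
  rcases lt_or_ge ((k : ℤ) * N) l with hlarge | hle
  · rw [hp.2 N l hlarge, hq.2 N l hlarge]
  lift l to ℕ using hnonneg
  exact h N l (mod_cast hle)

/-- `Φ` is the substitution `x_i ↦ z^i u`, described by its effect on coefficients. -/
def IsMonomialSubst (Φ : MvPowerSeries (Fin (k + 1)) ℂ → Pz) : Prop :=
  ∀ (f : MvPowerSeries (Fin (k + 1)) ℂ) (N : ℕ),
    PowerSeries.coeff (R := Lz) N (Φ f) =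
      ∑ m ∈ Finset.Nat.antidiagonalTuple (k + 1) N,
        MvPowerSeries.coeff (R := ℂ) (Finsupp.equivFunOnFinite.symm m) f •
          LaurentPolynomial.T (∑ i : Fin (k + 1), ((i : ℕ) : ℤ) * (m i : ℤ))

namespace IsMonomialSubst

section Function

variable {Φ : MvPowerSeries (Fin (k + 1)) ℂ → Pz}

theorem coeff_eq_sum (hΦ : IsMonomialSubst Φ) (f : MvPowerSeries (Fin (k + 1)) ℂ) (N : ℕ) :
    PowerSeries.coeff N (Φ f) = ∑ m ∈ Finset.finsuppAntidiag Finset.univ N,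
      MvPowerSeries.coeff m f • LaurentPolynomial.T (zDegree m : ℤ) := by
  rw [hΦ]
  refine Finset.sum_equiv Finsupp.equivFunOnFinite.symm (fun m => ?_) fun m _ => ?_
  · simp [Finset.Nat.mem_antidiagonalTuple]
  · simp [zDegree_eq_sum]

theorem coeffP_eq_sum (hΦ : IsMonomialSubst Φ) (f : MvPowerSeries (Fin (k + 1)) ℂ) (N : ℕ)
    (l : ℤ) : coeffP l N (Φ f) = ∑ m ∈ Finset.finsuppAntidiag Finset.univ N,
      if (zDegree m : ℤ) = l then MvPowerSeries.coeff m f else 0 := by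
  change coeffL l (PowerSeries.coeff N (Φ f)) = _
  simp only [hΦ.coeff_eq_sum, map_sum, map_smul, coeffL_T, smul_eq_mul, mul_ite, mul_one, mul_zero]

theorem coeffP_natCast (hΦ : IsMonomialSubst Φ) (f : MvPowerSeries (Fin (k + 1)) ℂ) (N l : ℕ) :
    coeffP l N (Φ f) = ∑ m ∈ bidegreeFiber k N l, MvPowerSeries.coeff m f := by
  simp only [hΦ.coeffP_eq_sum, bidegreeFiber, Finset.sum_filter, Nat.cast_inj]

theorem mem_OUinf_inf_OVinf (hΦ : IsMonomialSubst Φ) (f : MvPowerSeries (Fin (k + 1)) ℂ) :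
    Φ f ∈ OUinf ⊓ OVinf k := by
  constructor
  · intro N l hl
    rw [hΦ.coeffP_eq_sum]
    exact Finset.sum_eq_zero fun m _ => if_neg (by omega)
  · intro N l hl
    rw [hΦ.coeffP_eq_sum]
    refine Finset.sum_eq_zero fun m hm => if_neg ?_
    have hle : (zDegree m : ℤ) ≤ k * N :=
      mod_cast mem_finsuppAntidiag_univ.1 hm ▸ zDegree_le m
    omega

theorem range_eq (hΦ : IsMonomialSubst Φ) : Set.range Φ = ↑(OUinf ⊓ OVinf k) := by
  refine Set.Subset.antisymm (Set.range_subset_iff.2 hΦ.mem_OUinf_inf_OVinf) fun p hp => ?_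
  obtain ⟨f, hf⟩ := exists_forall_sum_bidegreeFiber_coeff_eq (k := k) fun N l => coeffP l N p
  refine ⟨f, eq_of_mem_OUinf_inf_OVinf (hΦ.mem_OUinf_inf_OVinf f) hp fun N l hl => ?_⟩
  rw [hΦ.coeffP_natCast, hf N l hl]

theorem map_X (hΦ : IsMonomialSubst Φ) (i : Fin (k + 1)) : Φ (MvPowerSeries.X i) = mon i 1 := by
  classical
  ext1 N
  simp only [hΦ.coeff_eq_sum, MvPowerSeries.coeff_X, ite_smul, one_smul, zero_smul,
    Finset.sum_ite_eq', mem_finsuppAntidiag_univ, Finsupp.degree_single, zDegree_single_one, mon,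
    PowerSeries.coeff_monomial, eq_comm]

end Function

theorem ker_eq {Φ : MvPowerSeries (Fin (k + 1)) ℂ →ₐ[ℂ] Pz} (hΦ : IsMonomialSubst Φ) :
    RingHom.ker Φ = Ideal.span (exchangeQuadrics k ℂ) := by
  apply le_antisymm
  · intro f hf
    refine mem_span_exchangeQuadrics_of_sum_coeff_eq_zero fun N l => ?_
    rw [← hΦ.coeffP_natCast, RingHom.mem_ker.1 hf, map_zero]
  · rw [Ideal.span_le]
    rintro _ ⟨i, i', j', j, hi, hj, -, rfl⟩
    simp only [SetLike.mem_coe, RingHom.mem_ker, map_sub, map_mul, hΦ.map_X, mon,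
      PowerSeries.monomial_mul_monomial, ← LaurentPolynomial.T_add, sub_eq_zero]
    congr 2
    omega

end IsMonomialSubst

end GlobalFunctions

/-- let `Φ : ℂ[[x₀,…,x_k]] → P` be the continuous `ℂ`-algebra homomorphism
substituting `x_i ↦ z^i·u` (pinned down coefficientwise: the `u^N`-coefficient of `Φ f` is
`Σ_{|m| = N} f_m z^{Σ i·mᵢ}`).  Its image is exactly `O_U^∞ ∩ O_V^∞` (the ring of global
functions on `Ẑ_k`) and its kernel is the ideal generated by the `x_i x_j − x_{i+1} x_{j−1}`
for `0 ≤ i ≤ k − 2`, `i + 2 ≤ j ≤ k`. -/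
theorem statement14 (k : ℕ) (hk : 1 ≤ k)
    (Φ : MvPowerSeries (Fin (k + 1)) ℂ →ₐ[ℂ] Pz)
    (hΦ : ∀ (f : MvPowerSeries (Fin (k + 1)) ℂ) (N : ℕ),
      PowerSeries.coeff (R := Lz) N (Φ f) =
        ∑ m ∈ Finset.Nat.antidiagonalTuple (k + 1) N,
          MvPowerSeries.coeff (R := ℂ) (Finsupp.equivFunOnFinite.symm m) f •
            LaurentPolynomial.T (∑ i : Fin (k + 1), ((i : ℕ) : ℤ) * (m i : ℤ))) :
    Set.range ⇑Φ = ↑(OUinf ⊓ OVinf k) ∧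
    RingHom.ker Φ = Ideal.span
      {f | ∃ i j : ℕ, ∃ (_ : i + 2 ≤ k) (_ : j ≤ k) (_ : i + 2 ≤ j),
        f = MvPowerSeries.X (⟨i, by omega⟩ : Fin (k + 1)) * MvPowerSeries.X ⟨j, by omega⟩ -
            MvPowerSeries.X ⟨i + 1, by omega⟩ * MvPowerSeries.X ⟨j - 1, by omega⟩} := by
  have hsubst : IsMonomialSubst Φ := hΦ
  refine ⟨hsubst.range_eq, hsubst.ker_eq.trans (congrArg Ideal.span (Set.ext fun f => ?_))⟩
  constructor
  · rintro ⟨i, i', j', j, hi, hj, hij, rfl⟩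
    have hj' : (j : ℕ) - 1 = j' := by omega
    exact ⟨i, j, by omega, by omega, by omega, by simp only [← hi, hj']⟩
  · rintro ⟨i, j, hi, hj, hij, rfl⟩
    exact ⟨⟨i, by omega⟩, ⟨i + 1, by omega⟩, ⟨j - 1, by omega⟩, ⟨j, by omega⟩, rfl,
      by dsimp only; omega, Fin.le_def.2 (by dsimp only; omega), rfl⟩
end
end
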